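/- arXiv:1904.10706 — 2 statements merged into one kernel-verified Lean document; each statement's English description precedes it below -/
import Mathlib

section
/- Let H be a finite set and f a map from subsets of H to a linearly ordered set T satisfying Monotonicity, and suppose every basis of (H, f) has cardinality at most d. Let I be a finite index set, π : I → H, and let Q ⊆ I be any finite subset. Then the number of indices i ∈ Q with f(π(Q ∖ {i})) < f(π(Q)) is at most d. -/
open Finset

/-- Every finite set contains a basis with the same value. -/
theorem exists_basis_subset {α T : Type*} [LinearOrder T] (f : Finset α → T)
    (mono : ∀ F G : Finset α, F ⊆ G → f F ≤ f G) (S : Finset α) :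
    ∃ B ⊆ S, f B = f S ∧ ∀ B' : Finset α, B' ⊂ B → f B' < f B := by
  induction S using Finset.strongInduction with
  | H S ih =>
    by_cases h : ∀ B' : Finset α, B' ⊂ S → f B' < f S
    · exact ⟨S, subset_rfl, rfl, h⟩
    · push Not at h
      obtain ⟨S', hS', hle⟩ := h
      obtain ⟨B, hB, hfB, hbasis⟩ := ih S' hS'
      exact ⟨B, hB.trans hS'.subset, hfB.trans (le_antisymm (mono _ _ hS'.subset) hle), hbasis⟩

/-- If every basis of `(H, f)` has cardinality at most `d` (and `f` is monotone),
then for any finite subset `Q` of the index set, at most `d` indices `i ∈ Q`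
satisfy `f(π(Q \ {i})) < f(π(Q))`. -/
theorem stmt_1 {α ι T : Type*} [DecidableEq α] [DecidableEq ι] [LinearOrder T]
    (f : Finset α → T)
    (mono : ∀ F G : Finset α, F ⊆ G → f F ≤ f G)
    (d : ℕ)
    (dim : ∀ B : Finset α, (∀ B' : Finset α, B' ⊂ B → f B' < f B) → B.card ≤ d)
    (π : ι → α) (Q : Finset ι) :
    (Q.filter (fun i : ι => f ((Q.erase i).image π) < f (Q.image π))).card ≤ d := by
  obtain ⟨B, hB, hfB, hbasis⟩ := exists_basis_subset f mono (Q.image π)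
  refine le_trans (Finset.card_le_card_of_injOn π ?_ ?_) (dim B hbasis)
  · intro i hi
    obtain ⟨-, hlt⟩ := Finset.mem_filter.mp hi
    by_contra hiB
    refine hlt.not_ge (hfB ▸ mono _ _ fun b hb => ?_)
    obtain ⟨j, hj, rfl⟩ := Finset.mem_image.mp (hB hb)
    exact Finset.mem_image_of_mem π
      (Finset.mem_erase.mpr ⟨fun hji => hiB (Finset.mem_coe.mpr (hji ▸ hb)), hj⟩)
  · intro i hi j hj hij
    obtain ⟨-, hlt⟩ := Finset.mem_filter.mp hi
    obtain ⟨hjQ, -⟩ := Finset.mem_filter.mp hj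
    by_contra hne
    refine hlt.not_ge (mono _ _ fun b hb => ?_)
    obtain ⟨k, hk, rfl⟩ := Finset.mem_image.mp hb
    by_cases hki : k = i
    · exact Finset.mem_image.mpr
        ⟨j, Finset.mem_erase.mpr ⟨Ne.symm hne, hjQ⟩, by rw [hki, hij]⟩
    · exact Finset.mem_image_of_mem π (Finset.mem_erase.mpr ⟨hki, hk⟩)
end

section
/- Let (H, f) be an LP-type problem of combinatorial dimension at most d (d ≥ 1), let I be a finite index set with |I| = m, and let π : I → H. Let k ≥ 1 and 1 ≤ r be integers with r < m/2 − k, and let c ≥ 1 be a real number. For each r-element subset R ⊆ I define W_R = { i ∈ I : f(π(R)) < f(π(R) ∪ {π(i)}) }. Then the number of r-element subsets R of I with |W_R| ≥ 2c · k · d · (m − r)/(r + 1) is at most C(m, r)/c^k; equivalently, for a uniformly random r-element subset R, the probability that |W_R| ≥ 2c · k · d · (m − r)/(r + 1) is at most 1/c^k. -/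
open Finset

/-- Every finite family of constraints contains an equivalent subfamily of size at most the
combinatorial dimension. -/
theorem exists_subset_card_le_image_eq {α ι T : Type*} [DecidableEq α] [LinearOrder T]
    {f : Finset α → T} (mono : ∀ F G : Finset α, F ⊆ G → f F ≤ f G) {d : ℕ}
    (dim : ∀ B : Finset α, (∀ B' : Finset α, B' ⊂ B → f B' < f B) → B.card ≤ d)
    (π : ι → α) (Q : Finset ι) :
    ∃ B ⊆ Q, B.card ≤ d ∧ f (B.image π) = f (Q.image π) := by
  classical
  obtain ⟨B, hB, hmin⟩ := exists_min_image
    ((Q.image π).powerset.filter fun B => f B = f (Q.image π)) card ⟨Q.image π, by simp⟩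
  simp only [mem_filter, mem_powerset] at hB hmin
  obtain ⟨C, hCQ, hCcard, hC⟩ : ∃ C ⊆ Q, C.card = B.card ∧ C.image π = B := by
    obtain ⟨C, hCQ, hinj, hC⟩ := exists_subset_injOn_image_eq_of_surjOn (f := π) Q B
      fun b hb => by simpa using hB.1 hb
    exact ⟨C, hCQ, by rw [← hC, card_image_of_injOn hinj], hC⟩
  refine ⟨C, hCQ, hCcard ▸ dim B fun B' hB' => ?_, hC ▸ hB.2⟩
  refine lt_of_le_of_ne (mono _ _ hB'.subset) fun h => ?_
  exact (card_lt_card hB').not_ge (hmin B' ⟨hB'.subset.trans hB.1, h.trans hB.2⟩)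

/-- At most `d ^ k` of the `k`-element subsets `K` of `Q` consist of elements violating
`Q \ K`. -/
theorem card_violating_subsets_le {α ι T : Type*} [DecidableEq α] [DecidableEq ι]
    [LinearOrder T] {f : Finset α → T} (mono : ∀ F G : Finset α, F ⊆ G → f F ≤ f G) {d : ℕ}
    (dim : ∀ B : Finset α, (∀ B' : Finset α, B' ⊂ B → f B' < f B) → B.card ≤ d)
    (π : ι → α) (k : ℕ) (Q : Finset ι) :
    ((Q.powersetCard k).filter fun K => ∀ i ∈ K,
      f ((Q \ K).image π) < f (insert (π i) ((Q \ K).image π))).card ≤ d ^ k := by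
  induction k generalizing Q with
  | zero => exact (card_filter_le _ _).trans (by simp)
  | succ k ih =>
    obtain ⟨B, hBQ, hBd, hB⟩ := exists_subset_card_le_image_eq mono dim π Q
    let S : ι → Finset (Finset ι) := fun b =>
      (((Q.erase b).powersetCard k).filter fun K => ∀ i ∈ K,
        f ((Q.erase b \ K).image π) < f (insert (π i) ((Q.erase b \ K).image π))).image
          (insert b)
    have hsub : ((Q.powersetCard (k + 1)).filter fun K => ∀ i ∈ K,
        f ((Q \ K).image π) < f (insert (π i) ((Q \ K).image π))) ⊆ B.biUnion S := by
      intro K hK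
      simp only [mem_filter, mem_powersetCard] at hK
      obtain ⟨⟨hKQ, hKcard⟩, hviol⟩ := hK
      obtain ⟨b, hbB, hbK⟩ : ∃ b ∈ B, b ∈ K := by
        by_contra! hdisj
        obtain ⟨i, hi⟩ : K.Nonempty := card_pos.mp (by omega)
        have hle : f (B.image π) ≤ f ((Q \ K).image π) :=
          mono _ _ (image_subset_image fun b hb => mem_sdiff.mpr ⟨hBQ hb, hdisj b hb⟩)
        have hge : f (insert (π i) ((Q \ K).image π)) ≤ f (Q.image π) :=
          mono _ _ (insert_subset (mem_image_of_mem π (hKQ hi))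
            (image_subset_image sdiff_subset))
        exact ((hviol i hi).trans_le (hge.trans (hB ▸ hle))).false
      have hsdiff : Q.erase b \ K.erase b = Q \ K := by
        ext x
        simp only [mem_sdiff, mem_erase]
        grind
      simp only [S, mem_biUnion, mem_image, mem_filter, mem_powersetCard]
      refine ⟨b, hbB, K.erase b, ⟨⟨erase_subset_erase b hKQ, ?_⟩, ?_⟩, insert_erase hbK⟩
      · rw [card_erase_of_mem hbK, hKcard, Nat.add_sub_cancel]
      · rw [hsdiff]
        exact fun i hi => hviol i (mem_of_mem_erase hi)
    calc _ ≤ (B.biUnion S).card := card_le_card hsub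
      _ ≤ B.card * d ^ k :=
        card_biUnion_le_card_mul _ _ _ fun b _ => card_image_le.trans (ih (Q.erase b))
      _ ≤ d * d ^ k := Nat.mul_le_mul_right _ hBd
      _ = d ^ (k + 1) := by ring

/-- The `k`-th binomial moment of the number of violators of an `r`-element sample. -/
theorem sum_choose_card_violators_le {α ι T : Type*} [DecidableEq α] [Fintype ι]
    [LinearOrder T] {f : Finset α → T} (mono : ∀ F G : Finset α, F ⊆ G → f F ≤ f G) {d : ℕ}
    (dim : ∀ B : Finset α, (∀ B' : Finset α, B' ⊂ B → f B' < f B) → B.card ≤ d)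
    (π : ι → α) (k r : ℕ) :
    ∑ R ∈ powersetCard r (univ : Finset ι),
      (univ.filter fun i : ι => f (R.image π) < f (insert (π i) (R.image π))).card.choose k
      ≤ (Fintype.card ι).choose (r + k) * d ^ k := by
  classical
  let V : Finset ι → Finset ι := fun R =>
    univ.filter fun i : ι => f (R.image π) < f (insert (π i) (R.image π))
  let S : Finset ι → Finset (Finset ι) := fun Q =>
    (Q.powersetCard k).filter fun K => ∀ i ∈ K,
      f ((Q \ K).image π) < f (insert (π i) ((Q \ K).image π))
  have hS : ∀ Q, (S Q).card ≤ d ^ k := fun Q => by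
    convert card_violating_subsets_le mono dim π k Q
  have hdisj : ∀ R K : Finset ι, K ⊆ V R → Disjoint R K := by
    intro R K hK
    refine disjoint_left.mpr fun i hiR hiK => ?_
    have h := (mem_filter.mp (hK hiK)).2
    rw [insert_eq_of_mem (mem_image_of_mem π hiR)] at h
    exact h.false
  have hcard : ((powersetCard r (univ : Finset ι)).sigma fun R => (V R).powersetCard k).card ≤
      ((powersetCard (r + k) (univ : Finset ι)).sigma S).card := by
    refine card_le_card_of_injOn (fun p => ⟨p.1 ∪ p.2, p.2⟩) ?_ ?_
    · rintro ⟨R, K⟩ hp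
      simp only [coe_sigma, Set.mem_sigma_iff, mem_coe, mem_powersetCard, subset_univ,
        true_and, S, mem_filter] at hp ⊢
      obtain ⟨hR, hKV, hK⟩ := hp
      have hRK := hdisj R K hKV
      refine ⟨by rw [card_union_of_disjoint hRK, hR, hK], ⟨subset_union_right, hK⟩, ?_⟩
      rw [union_sdiff_cancel_right hRK]
      exact fun i hi => (mem_filter.mp (hKV hi)).2
    · rintro ⟨R, K⟩ hp ⟨R', K'⟩ hp' heq
      simp only [coe_sigma, Set.mem_sigma_iff, mem_coe, mem_powersetCard] at hp hp'
      simp only [Sigma.mk.injEq, heq_eq_eq] at heq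
      obtain ⟨hunion, rfl⟩ := heq
      have hRR' : R = R' := by
        rw [← union_sdiff_cancel_right (hdisj R K hp.2.1), hunion,
          union_sdiff_cancel_right (hdisj R' K hp'.2.1)]
      rw [hRR']
  rw [card_sigma, card_sigma] at hcard
  calc ∑ R ∈ powersetCard r (univ : Finset ι), (V R).card.choose k
      = ∑ R ∈ powersetCard r (univ : Finset ι), ((V R).powersetCard k).card := by
        simp only [card_powersetCard]
    _ ≤ ∑ Q ∈ powersetCard (r + k) (univ : Finset ι), (S Q).card := hcard
    _ ≤ (powersetCard (r + k) (univ : Finset ι)).card • d ^ k :=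
      sum_le_card_nsmul _ _ _ fun Q _ => hS Q
    _ = (Fintype.card ι).choose (r + k) * d ^ k := by
      rw [card_powersetCard, card_univ, smul_eq_mul]

/-- The ratio `C(m, r + k) / C(m, r)` is at most `((m - r) / (r + 1)) ^ k`. -/
theorem choose_add_mul_succ_pow_le (m r k : ℕ) :
    m.choose (r + k) * (r + 1) ^ k ≤ m.choose r * (m - r) ^ k := by
  rcases lt_or_ge m (r + k) with h | h
  · simp [Nat.choose_eq_zero_of_lt h]
  have hchoose : m.choose (r + k) * (r + k).choose k = m.choose r * (m - r).choose k := by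
    have := Nat.choose_mul (n := m) (Nat.le_add_right r k)
    rwa [Nat.add_sub_cancel_left, Nat.choose_symm_add] at this
  have hpow : (r + 1) ^ k ≤ (r + k).descFactorial k := by
    have := Nat.pow_sub_le_descFactorial (r + k) k
    rwa [show r + k + 1 - k = r + 1 by omega] at this
  calc m.choose (r + k) * (r + 1) ^ k
      ≤ m.choose (r + k) * (r + k).descFactorial k := Nat.mul_le_mul_left _ hpow
    _ = m.choose r * (m - r).descFactorial k := by
      rw [Nat.descFactorial_eq_factorial_mul_choose, Nat.descFactorial_eq_factorial_mul_choose,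
        mul_left_comm, hchoose, mul_left_comm]
    _ ≤ m.choose r * (m - r) ^ k := Nat.mul_le_mul_left _ (Nat.descFactorial_le_pow _ _)

/-- If `2 * s ≤ w` and `k ≤ s`, then `s ^ k ≤ k! * C(w, k)`. -/
theorem pow_le_factorial_mul_choose {w k : ℕ} {s : ℝ} (hks : (k : ℝ) ≤ s)
    (hsw : 2 * s ≤ (w : ℝ)) : s ^ k ≤ (k.factorial : ℝ) * (w.choose k : ℝ) := by
  have hs : (0 : ℝ) ≤ s := k.cast_nonneg.trans hks
  have hkw : k ≤ w + 1 := by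
    have : (k : ℝ) ≤ w := by linarith
    exact (Nat.cast_le.mp this).trans w.le_succ
  have hdesc : (((w + 1 - k) ^ k : ℕ) : ℝ) ≤ ((k.factorial * w.choose k : ℕ) : ℝ) := by
    rw [← Nat.descFactorial_eq_factorial_mul_choose]
    exact Nat.cast_le.mpr (Nat.pow_sub_le_descFactorial w k)
  push_cast [Nat.cast_sub hkw] at hdesc
  exact (pow_le_pow_left₀ hs (by linarith) k).trans hdesc

/-- Tail bound for the violator set size (Lemma 10): for any `c ≥ 1`, the
number of `r`-element subsets `R` whose violator set has size at least
`2c·k·d·(m-r)/(r+1)` is at most `C(m,r)/c^k`; equivalently, for a uniformly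
random `R` the probability of this event is at most `1/c^k`. -/
theorem stmt_6 {α ι T : Type*} [DecidableEq α] [Fintype ι] [LinearOrder T]
    (f : Finset α → T)
    (mono : ∀ F G : Finset α, F ⊆ G → f F ≤ f G)
    (locality : ∀ F G : Finset α, F ⊆ G → f F = f G →
      ∀ h : α, f G < f (insert h G) → f F < f (insert h F))
    (d : ℕ) (hd : 1 ≤ d)
    (dim : ∀ B : Finset α, (∀ B' : Finset α, B' ⊂ B → f B' < f B) → B.card ≤ d)
    (m : ℕ) (hm : Fintype.card ι = m)
    (π : ι → α) (k r : ℕ) (hk : 1 ≤ k) (hr : 1 ≤ r)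
    (hrm : (r : ℝ) < (m : ℝ) / 2 - (k : ℝ))
    (c : ℝ) (hc : 1 ≤ c) :
    (((Finset.powersetCard r (Finset.univ : Finset ι)).filter (fun R =>
        2 * c * (k : ℝ) * d * ((m : ℝ) - r) / ((r : ℝ) + 1) ≤
          ((Finset.univ.filter (fun i : ι =>
            f (R.image π) < f (insert (π i) (R.image π)))).card : ℝ))).card : ℝ)
      ≤ (Nat.choose m r : ℝ) / c ^ k := by
  have hr0 : (0 : ℝ) < (r : ℝ) + 1 := by positivity
  have hk1 : (1 : ℝ) ≤ k := by exact_mod_cast hk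
  have hd1 : (1 : ℝ) ≤ d := by exact_mod_cast hd
  have hrm' : r ≤ m := by
    have : (r : ℝ) ≤ m := by linarith [(m.cast_nonneg : (0 : ℝ) ≤ m)]
    exact_mod_cast this
  set q : ℝ := ((m : ℝ) - r) / ((r : ℝ) + 1) with hq
  have hq1 : 1 ≤ q := by
    rw [hq, le_div_iff₀ hr0]
    linarith [(r.cast_nonneg : (0 : ℝ) ≤ r)]
  have hc0 : 0 < c := by linarith
  have hks : (k : ℝ) ≤ c * k * d * q := by
    have : 1 ≤ c * d * q := one_le_mul_of_one_le_of_one_le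
      (one_le_mul_of_one_le_of_one_le hc hd1) hq1
    nlinarith
  set bad := (Finset.powersetCard r (Finset.univ : Finset ι)).filter (fun R =>
        2 * c * (k : ℝ) * d * ((m : ℝ) - r) / ((r : ℝ) + 1) ≤
          ((Finset.univ.filter (fun i : ι =>
            f (R.image π) < f (insert (π i) (R.image π)))).card : ℝ))
  have hmoment := sum_choose_card_violators_le mono dim π k r
  rw [hm] at hmoment
  have hmarkov : (bad.card : ℝ) * (c * k * d * q) ^ k ≤
      k.factorial * (m.choose (r + k) * d ^ k) := by
    calc (bad.card : ℝ) * (c * k * d * q) ^ k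
        ≤ ∑ R ∈ bad, (k.factorial : ℝ) * ((univ.filter fun i : ι =>
            f (R.image π) < f (insert (π i) (R.image π))).card.choose k : ℝ) := by
          rw [← nsmul_eq_mul]
          refine card_nsmul_le_sum _ _ _ fun R hR => pow_le_factorial_mul_choose hks ?_
          refine le_trans (le_of_eq ?_) (mem_filter.mp hR).2
          rw [hq]
          ring
      _ ≤ ∑ R ∈ powersetCard r (univ : Finset ι), (k.factorial : ℝ) * ((univ.filter fun i : ι =>
            f (R.image π) < f (insert (π i) (R.image π))).card.choose k : ℝ) :=
          sum_le_sum_of_subset_of_nonneg (filter_subset _ _) fun _ _ _ => by positivity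
      _ ≤ k.factorial * (m.choose (r + k) * d ^ k) := by
          rw [← mul_sum]
          exact mul_le_mul_of_nonneg_left (by exact_mod_cast hmoment) (by positivity)
  have hratio : (m.choose (r + k) : ℝ) ≤ m.choose r * q ^ k := by
    have h : ((m.choose (r + k) * (r + 1) ^ k : ℕ) : ℝ) ≤
        ((m.choose r * (m - r) ^ k : ℕ) : ℝ) :=
      Nat.cast_le.mpr (choose_add_mul_succ_pow_le m r k)
    push_cast [Nat.cast_sub hrm'] at h
    rwa [hq, div_pow, ← mul_div_assoc, le_div_iff₀ (by positivity)]
  have hfact : (k.factorial : ℝ) ≤ (k : ℝ) ^ k := by exact_mod_cast Nat.factorial_le_pow k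
  rw [le_div_iff₀ (by positivity)]
  have hpos : 0 < ((k : ℝ) * d * q) ^ k := by positivity
  refine le_of_mul_le_mul_right ?_ hpos
  calc (bad.card : ℝ) * c ^ k * (k * d * q) ^ k
      = bad.card * (c * k * d * q) ^ k := by simp only [mul_pow]; ring
    _ ≤ k.factorial * (m.choose (r + k) * d ^ k) := hmarkov
    _ ≤ (k : ℝ) ^ k * (m.choose r * q ^ k * d ^ k) := by gcongr
    _ = m.choose r * (k * d * q) ^ k := by simp only [mul_pow]; ring
end
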